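/- arXiv:0712.2559 — 2 statements merged into one kernel-verified Lean document; each statement's English description precedes it below -/
import Mathlib

section
/- Let (A(n))_{n∈ℕ} be a stationary and ergodic sequence of random d×d matrices with entries in ℝ_max such that the positive part of max_{ij} A_{ij}(0) is integrable. Then γ(A) = max{ γ^{(c)} : c a strongly connected component of 𝒢(A) }. -/
open Filter MeasureTheory ProbabilityTheory Topology

noncomputable section

/-- Max-plus action of a `d × d` matrix over `ℝ_max = ℝ ∪ {-∞}` (encoded as `EReal`,
with `⊤` never used) on a vector: `(A ⊗ v) i = max_j (A i j + v j)`. -/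
def mpVec {d : ℕ} (A : Fin d → Fin d → EReal) (v : Fin d → EReal) : Fin d → EReal :=
  fun i => ⨆ j, A i j + v j

/-- `appProd n f v = f 0 ⊗ f 1 ⊗ ⋯ ⊗ f (n-1) ⊗ v` in the max-plus algebra. -/
def appProd {d : ℕ} : ℕ → (ℕ → Fin d → Fin d → EReal) → (Fin d → EReal) → Fin d → EReal
  | 0, _, v => v
  | n + 1, f, v => mpVec (f 0) (appProd n (fun k => f (k + 1)) v)

/-- `xvec f n = f (n-1) ⊗ ⋯ ⊗ f 0 ⊗ 0`; with `f m = A(m)` this is `x(n, 0)`. -/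
def xvec {d : ℕ} (f : ℕ → Fin d → Fin d → EReal) : ℕ → Fin d → EReal
  | 0 => fun _ => 0
  | n + 1 => mpVec (f n) (xvec f n)

/-- `lvec n f = f 0 ⊗ f 1 ⊗ ⋯ ⊗ f (n-1) ⊗ 0`; with `f k = A(-(k+1))` this is `y(n, 0)`. -/
def lvec {d : ℕ} (n : ℕ) (f : ℕ → Fin d → Fin d → EReal) : Fin d → EReal :=
  appProd n f (fun _ => 0)

/-- Multiplication of an extended real by `1/n`. -/
def mpScale (n : ℕ) (x : EReal) : EReal := (((n : ℝ)⁻¹ : ℝ) : EReal) * x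

open Classical in
/-- Restriction of a matrix to the indices in `c`: entries outside `c × c` are `-∞`. -/
def mpRestrict {d : ℕ} (c : Set (Fin d)) (M : Fin d → Fin d → EReal) : Fin d → Fin d → EReal :=
  fun i j => if i ∈ c ∧ j ∈ c then M i j else ⊥

/-- Arc relation of the graph `𝒢(A)` of a random matrix `A`:
`(i,j)` is an arc iff `A ω i j ≠ -∞` with positive probability. -/
def arcRel {Ω : Type*} [MeasurableSpace Ω] (μ : Measure Ω) {d : ℕ}
    (A : Ω → Fin d → Fin d → EReal) (i j : Fin d) : Prop :=
  μ {ω | A ω i j ≠ ⊥} ≠ 0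

/-- `c` is a strongly connected component of the graph with arc relation `r`
(the mutual-reachability class of some node; nodes on no circuit are alone in their class). -/
def IsSCC {d : ℕ} (r : Fin d → Fin d → Prop) (c : Set (Fin d)) : Prop :=
  ∃ i, c = {j | Relation.ReflTransGen r i j ∧ Relation.ReflTransGen r j i}

/-- `i → c` : the node `i` reaches the component `c`. -/
def nodeReach {d : ℕ} (r : Fin d → Fin d → Prop) (i : Fin d) (c : Set (Fin d)) : Prop :=
  ∃ j ∈ c, Relation.ReflTransGen r i j

/-- `c → c'` : the component `c` reaches the component `c'`. -/
def sccReach {d : ℕ} (r : Fin d → Fin d → Prop) (c c' : Set (Fin d)) : Prop :=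
  ∃ i ∈ c, nodeReach r i c'

/-- `γ^{[c]} = max { γ^{(c')} : c → c' }`, where `γ` assigns to each s.c.c. its
maximal Lyapunov exponent. -/
def gammaBrack {d : ℕ} (r : Fin d → Fin d → Prop) (γ : Set (Fin d) → EReal)
    (c : Set (Fin d)) : EReal :=
  ⨆ c', ⨆ (_ : IsSCC r c' ∧ sccReach r c c'), γ c'

/-- The set of nodes `H_c = {c}` : nodes `i` with `c → i → c̃` for some s.c.c. `c̃`
realizing `γ^{(c̃)} = γ^{[c]}`. -/
def Hset {d : ℕ} (r : Fin d → Fin d → Prop) (γ : Set (Fin d) → EReal)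
    (c : Set (Fin d)) : Set (Fin d) :=
  {i | ∃ ct, IsSCC r ct ∧ (∃ j ∈ c, Relation.ReflTransGen r j i) ∧ nodeReach r i ct ∧
    γ ct = gammaBrack r γ c}

/-- `max { γ^{(c)} : c s.c.c. with i → c }`. -/
def limFormula {d : ℕ} (r : Fin d → Fin d → Prop) (γ : Set (Fin d) → EReal) (i : Fin d) : EReal :=
  ⨆ c, ⨆ (_ : IsSCC r c ∧ nodeReach r i c), γ c

/-!
The bound `γ(A) ≥ γ^{(c)}` holds because restricting a matrix to `c` lowers its entries. For the
converse, let `a` be a real number larger than every `γ^{(c)}`. Almost surely, the maximal excess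
over slope `a` of the paths that start at a node and stay in its component is finite. Truncated at
`K`, and lowered by a multiple of the number of reachable nodes so as to absorb the arcs between
components, it is a bounded potential `Φ` with
`A_{ij}(m) ≤ a + D_K(m) + Φ_j(m) - Φ_i(m + 1)` for all arcs, where the defect `D_K ≥ 0` vanishes
unless some excess or entry at time `m` exceeds `K`. Summing along paths bounds the growth rate of
the products by `a` plus the Birkhoff averages of `D_K`, whence `γ(A) ≤ a + 𝔼[D_K]` by invariance,
and `𝔼[D_K] → 0` as `K → ∞`.
-/

section MaxPlus
variable {d : ℕ}

theorem mpScale_mono (n : ℕ) : Monotone (mpScale n) := fun _ _ h =>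
  mul_le_mul_of_nonneg_left h (by exact_mod_cast inv_nonneg.2 n.cast_nonneg)

theorem mpScale_coe (n : ℕ) (x : ℝ) : mpScale n x = ((n : ℝ)⁻¹ * x : ℝ) :=
  (EReal.coe_mul _ _).symm

theorem le_of_mpScale_lt {n : ℕ} (hn : n ≠ 0) {x : EReal} {a : ℝ} (h : mpScale n x < a) :
    x ≤ ((n * a : ℝ) : EReal) := by
  contrapose! h
  calc (a : EReal) = mpScale n ((n * a : ℝ) : EReal) := by
        rw [mpScale_coe, inv_mul_cancel_left₀ (Nat.cast_ne_zero.2 hn)]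
    _ ≤ mpScale n x := mpScale_mono n h.le

theorem mpRestrict_le (c : Set (Fin d)) (B : Fin d → Fin d → EReal) : mpRestrict c B ≤ B := by
  intro i j
  unfold mpRestrict
  split_ifs
  exacts [le_rfl, bot_le]

theorem mpRestrict_of_mem {c : Set (Fin d)} {i j : Fin d} (hi : i ∈ c) (hj : j ∈ c)
    (B : Fin d → Fin d → EReal) : mpRestrict c B i j = B i j :=
  if_pos ⟨hi, hj⟩

theorem add_le_mpVec (B : Fin d → Fin d → EReal) (v : Fin d → EReal) (i j : Fin d) :
    B i j + v j ≤ mpVec B v i :=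
  le_iSup (fun j => B i j + v j) j

theorem exists_mpVec_eq (B : Fin d → Fin d → EReal) (v : Fin d → EReal) (i : Fin d) :
    ∃ j, mpVec B v i = B i j + v j :=
  have : Nonempty (Fin d) := ⟨i⟩
  (exists_eq_ciSup_of_finite (f := fun j => B i j + v j)).imp fun _ => Eq.symm

theorem lvec_succ (f : ℕ → Fin d → Fin d → EReal) (n : ℕ) :
    lvec (n + 1) f = mpVec (f 0) (lvec n fun m => f (m + 1)) :=
  rfl

theorem lvec_ne_top {f : ℕ → Fin d → Fin d → EReal} (hf : ∀ m i j, f m i j ≠ ⊤) (n : ℕ)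
    (i : Fin d) : lvec n f i ≠ ⊤ := by
  induction n generalizing f i with
  | zero => exact EReal.zero_ne_top
  | succ n ih =>
    obtain ⟨j, hj⟩ := exists_mpVec_eq (f 0) (lvec n fun m => f (m + 1)) i
    rw [lvec_succ, hj]
    exact (EReal.add_lt_top (hf 0 i j) (ih (fun m => hf (m + 1)) j)).ne

theorem xvec_mono {f g : ℕ → Fin d → Fin d → EReal} (h : f ≤ g) : xvec f ≤ xvec g := by
  intro n
  induction n with
  | zero => exact le_rfl
  | succ n ih => exact fun i => iSup_mono fun j => add_le_add (h n i j) (ih j)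

theorem xvec_mpRestrict_of_notMem {c : Set (Fin d)} {i : Fin d} (hi : i ∉ c)
    (f : ℕ → Fin d → Fin d → EReal) {n : ℕ} (hn : n ≠ 0) :
    xvec (fun m => mpRestrict c (f m)) n i = ⊥ := by
  obtain ⟨n, rfl⟩ := Nat.exists_eq_succ_of_ne_zero hn
  simp [xvec, mpVec, mpRestrict, hi]

/- With transposed factors, `lvec` computes column maxima: its `j`-th entry is the maximal weight
of the paths that start at `j`, while the `i`-th entry of `xvec` concerns those that end at `i`. -/
theorem lvec_swap_add_xvec_le (f : ℕ → Fin d → Fin d → EReal) (k n : ℕ) (j : Fin d) :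
    lvec k (fun m => Function.swap (f (m + n))) j + xvec f n j ≤ ⨆ i, xvec f (k + n) i := by
  induction k generalizing n j with
  | zero =>
    rw [zero_add]
    exact (zero_add (xvec f n j)).trans_le (le_iSup (xvec f n) j)
  | succ k ih =>
    obtain ⟨i, hi⟩ := exists_mpVec_eq (Function.swap (f n))
      (lvec k fun m => Function.swap (f (m + (n + 1)))) j
    calc lvec (k + 1) (fun m => Function.swap (f (m + n))) j + xvec f n j
        = f n i j + lvec k (fun m => Function.swap (f (m + (n + 1)))) i + xvec f n j := by
          simp only [lvec_succ, zero_add, Nat.add_assoc, Nat.add_comm 1 n, hi, Function.swap]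
      _ = lvec k (fun m => Function.swap (f (m + (n + 1)))) i + (f n i j + xvec f n j) := by
          ac_rfl
      _ ≤ lvec k (fun m => Function.swap (f (m + (n + 1)))) i + xvec f (n + 1) i := by
          gcongr
          exact add_le_mpVec (f n) (xvec f n) i j
      _ ≤ ⨆ i, xvec f (k + 1 + n) i := by
          rw [Nat.succ_add_eq_add_succ]
          exact ih (n + 1) i

theorem lvec_swap_le_iSup_xvec (f : ℕ → Fin d → Fin d → EReal) (n : ℕ) (j : Fin d) :
    lvec n (fun m => Function.swap (f m)) j ≤ ⨆ i, xvec f n i := by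
  simpa [xvec] using lvec_swap_add_xvec_le f n 0 j

theorem xvec_le_of_potential {f : ℕ → Fin d → Fin d → EReal} {Φ : ℕ → Fin d → ℝ} {β : ℕ → ℝ}
    {C : ℝ} (h0 : ∀ i, Φ 0 i ≤ C)
    (hstep : ∀ m i j, f m i j ≤ ((β m + Φ m j - Φ (m + 1) i : ℝ) : EReal)) (n : ℕ) (i : Fin d) :
    xvec f n i ≤ ((C + ∑ m ∈ Finset.range n, β m - Φ n i : ℝ) : EReal) := by
  induction n generalizing i with
  | zero =>
    change ((0 : ℝ) : EReal) ≤ _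
    exact EReal.coe_le_coe_iff.2 (by simpa using h0 i)
  | succ n ih =>
    refine iSup_le fun j => (add_le_add (hstep n i j) (ih j)).trans_eq ?_
    rw [← EReal.coe_add, Finset.sum_range_succ]
    congr 1
    ring

end MaxPlus

section Reachability
variable {α : Type*} {r : α → α → Prop}

/-- The strongly connected component of the node `i` in the graph with arc relation `r`. -/
def sccOf (r : α → α → Prop) (i : α) : Set α :=
  {j | Relation.ReflTransGen r i j ∧ Relation.ReflTransGen r j i}

/-- The number of nodes reachable from `i` in the graph with arc relation `r`, which ranks the
strongly connected components compatibly with reachability. -/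
def reachRank (r : α → α → Prop) (i : α) : ℕ :=
  {j | Relation.ReflTransGen r i j}.ncard

theorem mem_sccOf_self (r : α → α → Prop) (i : α) : i ∈ sccOf r i :=
  ⟨.refl, .refl⟩

theorem sccOf_eq_of_mem {i j : α} (h : i ∈ sccOf r j) : sccOf r i = sccOf r j :=
  Set.ext fun _ =>
    ⟨fun hk => ⟨h.1.trans hk.1, hk.2.trans h.2⟩, fun hk => ⟨h.2.trans hk.1, hk.2.trans h.1⟩⟩

theorem reachRank_eq_of_mem_sccOf {i j : α} (h : i ∈ sccOf r j) :
    reachRank r i = reachRank r j :=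
  congrArg Set.ncard (Set.ext fun _ => ⟨h.1.trans, h.2.trans⟩)

theorem reachRank_lt_of_notMem_sccOf [Finite α] {i j : α} (hij : r i j) (h : i ∉ sccOf r j) :
    reachRank r j < reachRank r i :=
  Set.ncard_lt_ncard ⟨fun _ hk => hk.head hij, fun hsub => h ⟨hsub .refl, .single hij⟩⟩

theorem reachRank_le_card [Finite α] (r : α → α → Prop) (i : α) : reachRank r i ≤ Nat.card α :=
  Set.ncard_le_card _

end Reachability

section Excess
variable {d : ℕ}

theorem iSup_lt_top_of_eventually_le {α : Type*} [CompleteLinearOrder α] {u : ℕ → α} {b : α}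
    (hu : ∀ n, u n < ⊤) (hb : b < ⊤) (h : ∀ᶠ n in atTop, u n ≤ b) : ⨆ n, u n < ⊤ := by
  obtain ⟨N, hN⟩ := eventually_atTop.1 h
  calc ⨆ n, u n ≤ (Finset.range N).sup u ⊔ b := iSup_le fun n => by
        rcases lt_or_ge n N with hn | hn
        · exact le_sup_of_le_left (Finset.le_sup (Finset.mem_range.2 hn))
        · exact le_sup_of_le_right (hN n hn)
    _ < ⊤ := max_lt ((Finset.sup_lt_iff (bot_le.trans_lt hb)).2 fun n _ => hu n) hb

/-- The maximal excess, over the slope `a`, of the weight of a path of any length that starts at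
`j` at time `0`; the transposition makes `lvec` record weights by starting node. -/
def excess (a : ℝ) (f : ℕ → Fin d → Fin d → EReal) (j : Fin d) : EReal :=
  ⨆ n : ℕ, lvec n (fun m => Function.swap (f m)) j - ((n * a : ℝ) : EReal)

theorem excess_nonneg (a : ℝ) (f : ℕ → Fin d → Fin d → EReal) (j : Fin d) : 0 ≤ excess a f j :=
  le_iSup_of_le 0 (by simp [lvec, appProd])

theorem lvec_swap_le_of_excess_le {a b : ℝ} {f : ℕ → Fin d → Fin d → EReal} {j : Fin d}
    (h : excess a f j ≤ b) (n : ℕ) :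
    lvec n (fun m => Function.swap (f m)) j ≤ ((n * a + b : ℝ) : EReal) := by
  have hn := (le_iSup _ n).trans h
  rw [EReal.sub_le_iff_le_add (.inl (EReal.coe_ne_bot _)) (.inl (EReal.coe_ne_top _))] at hn
  rwa [EReal.coe_add, add_comm]

theorem excess_shift_le {a b w : ℝ} {f : ℕ → Fin d → Fin d → EReal} {i j : Fin d}
    (hw : f 0 i j = w) (h : excess a f j ≤ b) :
    excess a (fun m => f (m + 1)) i ≤ ((a + b - w : ℝ) : EReal) := by
  refine iSup_le fun n => ?_
  have hn := (add_le_mpVec (Function.swap (f 0)) _ j i).trans (lvec_swap_le_of_excess_le h (n + 1))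
  rw [Function.swap, hw, add_comm, ← EReal.le_sub_iff_add_le (.inl (EReal.coe_ne_bot _))
    (.inl (EReal.coe_ne_top _)), ← EReal.coe_sub] at hn
  rw [EReal.sub_le_iff_le_add (.inl (EReal.coe_ne_bot _)) (.inl (EReal.coe_ne_top _)),
    ← EReal.coe_add]
  refine hn.trans_eq (congrArg _ ?_)
  push_cast
  ring

theorem excess_lt_top {a : ℝ} {f : ℕ → Fin d → Fin d → EReal} (hf : ∀ m i j, f m i j ≠ ⊤)
    {j : Fin d}
    (h : ∀ᶠ n : ℕ in atTop, lvec n (fun m => Function.swap (f m)) j ≤ ((n * a : ℝ) : EReal)) :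
    excess a f j < ⊤ := by
  refine iSup_lt_top_of_eventually_le (fun n => ?_) EReal.zero_lt_top (h.mono fun n hn => ?_)
  · rw [sub_eq_add_neg, ← EReal.coe_neg]
    exact EReal.add_lt_top (lvec_ne_top (fun m i j => hf m j i) n j) (EReal.coe_ne_top _)
  · rwa [EReal.sub_nonpos]

theorem excess_mpRestrict_lt_top {a : ℝ} {f : ℕ → Fin d → Fin d → EReal}
    (hf : ∀ m i j, f m i j ≠ ⊤) {c : Set (Fin d)} {γ : EReal} (hγ : γ < a)
    (hlim : Tendsto
      (fun n => mpScale n (⨆ i, ⨆ (_ : i ∈ c), xvec (fun m => mpRestrict c (f m)) n i))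
      atTop (𝓝 γ)) (j : Fin d) :
    excess a (fun m => mpRestrict c (f m)) j < ⊤ := by
  refine excess_lt_top (fun m i j => ((mpRestrict_le c (f m) i j).trans_lt
    (hf m i j).lt_top).ne) ?_
  filter_upwards [hlim.eventually_lt_const hγ, eventually_ne_atTop 0] with n hn hn0
  refine (lvec_swap_le_iSup_xvec _ n j).trans ?_
  refine (iSup_le fun i => ?_).trans (le_of_mpScale_lt hn0 hn)
  by_cases hi : i ∈ c
  · exact le_iSup₂ (f := fun i (_ : i ∈ c) => xvec (fun m => mpRestrict c (f m)) n i) i hi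
  · exact (xvec_mpRestrict_of_notMem hi f hn0).trans_le bot_le

/-- The excess of the paths that start at `j` and stay in the strongly connected component of
`j`. -/
def sccExcess (r : Fin d → Fin d → Prop) (a : ℝ) (f : ℕ → Fin d → Fin d → EReal) (j : Fin d) :
    EReal :=
  excess a (fun m => mpRestrict (sccOf r j) (f m)) j

theorem sccExcess_shift_le {r : Fin d → Fin d → Prop} {a b w : ℝ}
    {f : ℕ → Fin d → Fin d → EReal} {i j : Fin d} (hi : i ∈ sccOf r j) (hw : f 0 i j = w)
    (h : sccExcess r a f j ≤ b) :
    sccExcess r a (fun m => f (m + 1)) i ≤ ((a + b - w : ℝ) : EReal) := by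
  rw [sccExcess, sccOf_eq_of_mem hi]
  exact excess_shift_le (f := fun m => mpRestrict (sccOf r j) (f m))
    ((mpRestrict_of_mem hi (mem_sccOf_self r j) _).trans hw) h

/-- The excess within the component of the starting node, truncated at `K` so as to be bounded. -/
def truncatedExcess (r : Fin d → Fin d → Prop) (a K : ℝ) (f : ℕ → Fin d → Fin d → EReal)
    (j : Fin d) : ℝ :=
  (sccExcess r a f j ⊓ K).toReal

theorem coe_truncatedExcess (r : Fin d → Fin d → Prop) (a : ℝ) {K : ℝ} (hK : 0 ≤ K)
    (f : ℕ → Fin d → Fin d → EReal) (j : Fin d) :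
    (truncatedExcess r a K f j : EReal) = sccExcess r a f j ⊓ K :=
  EReal.coe_toReal (ne_top_of_le_ne_top (EReal.coe_ne_top K) inf_le_right)
    (ne_bot_of_le_ne_bot EReal.zero_ne_bot (le_inf (excess_nonneg _ _ _) (mod_cast hK)))

theorem truncatedExcess_nonneg (r : Fin d → Fin d → Prop) (a : ℝ) {K : ℝ} (hK : 0 ≤ K)
    (f : ℕ → Fin d → Fin d → EReal) (j : Fin d) : 0 ≤ truncatedExcess r a K f j :=
  EReal.toReal_nonneg (le_inf (excess_nonneg _ _ _) (mod_cast hK))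

theorem truncatedExcess_le (r : Fin d → Fin d → Prop) (a : ℝ) {K : ℝ} (hK : 0 ≤ K)
    (f : ℕ → Fin d → Fin d → EReal) (j : Fin d) : truncatedExcess r a K f j ≤ K :=
  EReal.coe_le_coe_iff.1 ((coe_truncatedExcess r a hK f j).trans_le inf_le_right)

theorem le_truncatedExcess_sub_of_mem_sccOf {r : Fin d → Fin d → Prop} {a K G w : ℝ}
    {f : ℕ → Fin d → Fin d → EReal} {i j : Fin d} (hK : 0 ≤ K) (hG : 0 ≤ G)
    (hbad : K < sccExcess r a f j → w ≤ a + G) (hi : i ∈ sccOf r j) (hw : f 0 i j = w) :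
    w ≤ a + G + truncatedExcess r a K f j - truncatedExcess r a K (fun m => f (m + 1)) i := by
  have hj := coe_truncatedExcess r a hK f j
  rcases le_or_gt (sccExcess r a f j) K with hle | hlt
  · rw [inf_eq_left.2 hle] at hj
    have hshift : truncatedExcess r a K (fun m => f (m + 1)) i ≤
        a + truncatedExcess r a K f j - w := by
      rw [← EReal.coe_le_coe_iff, coe_truncatedExcess r a hK]
      exact inf_le_left.trans (sccExcess_shift_le hi hw hj.ge)
    linarith
  · rw [inf_eq_right.2 hlt.le, EReal.coe_eq_coe_iff] at hj
    linarith [hbad hlt, truncatedExcess_le r a hK (fun m => f (m + 1)) i]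

/-- A bounded potential on the nodes: the truncated excess, lowered by a multiple of the rank that
outweighs every loss on an arc between two components. -/
def potential (r : Fin d → Fin d → Prop) (a K : ℝ) (f : ℕ → Fin d → Fin d → EReal)
    (j : Fin d) : ℝ :=
  truncatedExcess r a K f j - (2 * K + |a|) * reachRank r j

theorem potential_le (r : Fin d → Fin d → Prop) (a : ℝ) {K : ℝ} (hK : 0 ≤ K)
    (f : ℕ → Fin d → Fin d → EReal) (j : Fin d) : potential r a K f j ≤ K :=
  (sub_le_self _ (by positivity)).trans (truncatedExcess_le r a hK f j)

theorem neg_le_potential (r : Fin d → Fin d → Prop) (a : ℝ) {K : ℝ} (hK : 0 ≤ K)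
    (f : ℕ → Fin d → Fin d → EReal) (j : Fin d) :
    -((2 * K + |a|) * d) ≤ potential r a K f j := by
  have hrank : (reachRank r j : ℝ) ≤ d := mod_cast (reachRank_le_card r j).trans_eq (Nat.card_fin d)
  have hmul : (2 * K + |a|) * reachRank r j ≤ (2 * K + |a|) * d := by gcongr
  unfold potential
  linarith [truncatedExcess_nonneg r a hK f j]

/-- The positive part of the largest entry of a matrix, as a real number. -/
def entryBound (B : Fin d → Fin d → EReal) : ℝ :=
  ((⨆ i, ⨆ j, B i j) ⊔ 0).toReal

theorem le_entryBound {B : Fin d → Fin d → EReal} (hB : ∀ i j, B i j ≠ ⊤) (i j : Fin d) :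
    B i j ≤ entryBound B := by
  have : Nonempty (Fin d) := ⟨i⟩
  have hsup : (⨆ i, ⨆ j, B i j) ≠ ⊤ := by
    obtain ⟨k, hk⟩ := exists_eq_ciSup_of_finite (f := fun i => ⨆ j, B i j)
    obtain ⟨l, hl⟩ := exists_eq_ciSup_of_finite (f := B k)
    exact hk ▸ hl ▸ hB k l
  exact ((le_iSup₂ i j).trans le_sup_left).trans
    (EReal.le_coe_toReal (max_lt hsup.lt_top EReal.zero_lt_top).ne)

theorem entryBound_nonneg (B : Fin d → Fin d → EReal) : 0 ≤ entryBound B :=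
  EReal.toReal_nonneg le_sup_right

/-- The quantity whose size decides whether the potential truncated at `K` controls the arcs at
time `0`: it does so wherever the obstruction is at most `K`. -/
def obstruction (r : Fin d → Fin d → Prop) (a : ℝ) (f : ℕ → Fin d → Fin d → EReal) : EReal :=
  entryBound (f 0) ⊔ ⨆ j, sccExcess r a f j

open Classical in
/-- The amount by which the potential truncated at `K` may fail to control the arcs at time `0`. -/
def defect (r : Fin d → Fin d → Prop) (a K : ℝ) (f : ℕ → Fin d → Fin d → EReal) : ℝ :=
  if K < obstruction r a f then entryBound (f 0) + |a| else 0

theorem defect_nonneg (r : Fin d → Fin d → Prop) (a K : ℝ) (f : ℕ → Fin d → Fin d → EReal) :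
    0 ≤ defect r a K f := by
  unfold defect
  split_ifs
  exacts [add_nonneg (entryBound_nonneg _) (abs_nonneg a), le_rfl]

theorem le_potential_sub {r : Fin d → Fin d → Prop} {a K : ℝ}
    {f : ℕ → Fin d → Fin d → EReal} (hr : ∀ i j, ¬ r i j → f 0 i j = ⊥)
    (hf : ∀ i j, f 0 i j ≠ ⊤) (hK : 0 ≤ K) (i j : Fin d) :
    f 0 i j ≤ ((a + defect r a K f + potential r a K f j -
      potential r a K (fun m => f (m + 1)) i : ℝ) : EReal) := by
  by_cases hbot : f 0 i j = ⊥
  · exact hbot.trans_le bot_le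
  have hij : r i j := not_imp_comm.1 (hr i j) hbot
  have hle := le_entryBound hf i j
  lift f 0 i j to ℝ using ⟨hf i j, hbot⟩ with w hw
  rw [EReal.coe_le_coe_iff] at hle
  have hlarge (h : K < obstruction r a f) : w ≤ a + defect r a K f := by
    rw [defect, if_pos h]
    linarith [neg_abs_le a]
  have hdefect := defect_nonneg r a K f
  rw [EReal.coe_le_coe_iff, potential, potential]
  by_cases hi : i ∈ sccOf r j
  · rw [reachRank_eq_of_mem_sccOf hi]
    linarith [le_truncatedExcess_sub_of_mem_sccOf hK hdefect
      (fun hj => hlarge (hj.trans_le ((le_iSup _ j).trans le_sup_right))) hi hw.symm]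
  · have hrank : (reachRank r j : ℝ) + 1 ≤ reachRank r i :=
      mod_cast reachRank_lt_of_notMem_sccOf hij hi
    have hdrop : (2 * K + |a|) * (reachRank r j + 1) ≤ (2 * K + |a|) * reachRank r i := by gcongr
    have hwK : w ≤ a + defect r a K f + K + |a| := by
      rcases le_or_gt (entryBound (f 0)) K with hsmall | hbig
      · linarith [neg_abs_le a]
      · linarith [hlarge (lt_sup_of_lt_left (EReal.coe_lt_coe_iff.2 hbig)), abs_nonneg a]
    linarith [truncatedExcess_nonneg r a hK f j,
      truncatedExcess_le r a hK (fun m => f (m + 1)) i]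

end Excess

section Ergodic
variable {Ω : Type*} [MeasurableSpace Ω] {μ : Measure Ω} {θ : Ω → Ω}

theorem integral_comp_iterate {E : Type*} [NormedAddCommGroup E] [NormedSpace ℝ E]
    (hθ : MeasurePreserving θ μ μ) {G : Ω → E} (hG : AEStronglyMeasurable G μ) (m : ℕ) :
    ∫ ω, G (θ^[m] ω) ∂μ = ∫ ω, G ω ∂μ := by
  have hm := hθ.iterate m
  rw [← integral_map hm.aemeasurable (by rwa [hm.map_eq]), hm.map_eq]

theorem integrable_birkhoffAverage (hθ : MeasurePreserving θ μ μ) {G : Ω → ℝ}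
    (hG : Integrable G μ) (n : ℕ) : Integrable (birkhoffAverage ℝ θ G n) μ :=
  (integrable_finsetSum _ fun m _ => (hθ.iterate m).integrable_comp_of_integrable hG).const_mul _

theorem integral_birkhoffAverage (hθ : MeasurePreserving θ μ μ) {G : Ω → ℝ}
    (hG : Integrable G μ) {n : ℕ} (hn : n ≠ 0) :
    ∫ ω, birkhoffAverage ℝ θ G n ω ∂μ = ∫ ω, G ω ∂μ := by
  have hint (m : ℕ) : Integrable (fun ω => G (θ^[m] ω)) μ :=
    (hθ.iterate m).integrable_comp_of_integrable hG
  simp only [birkhoffAverage, birkhoffSum, integral_smul,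
    integral_finsetSum _ fun m _ => hint m, integral_comp_iterate hθ hG.aestronglyMeasurable,
    Finset.sum_const, Finset.card_range, ← Nat.cast_smul_eq_nsmul ℝ]
  exact inv_smul_smul₀ (Nat.cast_ne_zero.2 hn) _

theorem le_integral_of_eventually_le_birkhoffAverage [IsProbabilityMeasure μ]
    (hθ : MeasurePreserving θ μ μ) {G : Ω → ℝ} (hG : Integrable G μ) (hG0 : ∀ ω, 0 ≤ G ω)
    {ε : ℝ} (h : ∀ᵐ ω ∂μ, ∀ᶠ n in atTop, ε ≤ birkhoffAverage ℝ θ G n ω) :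
    ε ≤ ∫ ω, G ω ∂μ := by
  have havg0 (n : ℕ) (ω : Ω) : 0 ≤ birkhoffAverage ℝ θ G n ω :=
    mul_nonneg (inv_nonneg.2 n.cast_nonneg) (Finset.sum_nonneg fun m _ => hG0 _)
  have hlim : Tendsto (fun n => ∫ ω, min (birkhoffAverage ℝ θ G n ω) ε ∂μ) atTop
      (𝓝 (∫ _, ε ∂μ)) := by
    refine tendsto_integral_of_dominated_convergence (fun _ => |ε|)
      (fun n => ((integrable_birkhoffAverage hθ hG n).inf (integrable_const ε)).1)
      (integrable_const _) (fun n => ae_of_all _ fun ω => ?_) ?_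
    · rw [Real.norm_eq_abs, abs_le]
      exact ⟨le_min (by linarith [abs_nonneg ε, havg0 n ω]) (neg_abs_le ε),
        (min_le_right _ _).trans (le_abs_self ε)⟩
    · filter_upwards [h] with ω hω
      exact tendsto_const_nhds.congr' (hω.mono fun n hn => (min_eq_right hn).symm)
  rw [integral_const, probReal_univ, one_smul] at hlim
  refine le_of_tendsto hlim ?_
  filter_upwards [eventually_ne_atTop 0] with n hn
  rw [← integral_birkhoffAverage hθ hG hn]
  exact integral_mono ((integrable_birkhoffAverage hθ hG n).inf (integrable_const ε))
    (integrable_birkhoffAverage hθ hG n) fun ω => min_le_left _ _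

theorem tendsto_setIntegral_natCast_lt {E : Type*} [NormedAddCommGroup E] [NormedSpace ℝ E]
    {Z : Ω → EReal} (hZ : Measurable Z) (hfin : ∀ᵐ ω ∂μ, Z ω < ⊤) {F : Ω → E}
    (hF : Integrable F μ) :
    Tendsto (fun K : ℕ => ∫ ω in {ω | ((K : ℝ) : EReal) < Z ω}, F ω ∂μ) atTop (𝓝 0) := by
  have hlim := Antitone.tendsto_setIntegral (μ := μ) (f := F)
    (s := fun K : ℕ => {ω | ((K : ℝ) : EReal) < Z ω})
    (fun K => measurableSet_lt measurable_const hZ)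
    (fun K L hKL ω hω => (EReal.coe_le_coe_iff.2 (Nat.cast_le.2 hKL)).trans_lt hω)
    hF.integrableOn
  rwa [setIntegral_measure_zero] at hlim
  refine measure_mono_null (fun ω hω => ?_) (ae_iff.1 hfin)
  refine not_lt_top_iff.2 ((EReal.eq_top_iff_forall_lt _).2 fun y => ?_)
  obtain ⟨K, hK⟩ := exists_nat_ge y
  exact (EReal.coe_le_coe_iff.2 hK).trans_lt (Set.mem_iInter.1 hω K)

end Ergodic

section RandomMatrices
variable {d : ℕ} {Ω : Type*}

theorem xvec_iterate_le {r : Fin d → Fin d → Prop} (a : ℝ) {K : ℝ} (hK : 0 ≤ K) {θ : Ω → Ω}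
    {A : Ω → Fin d → Fin d → EReal} (hA : ∀ ω i j, A ω i j ≠ ⊤) {ω : Ω}
    (hr : ∀ m i j, ¬ r i j → A (θ^[m] ω) i j = ⊥) (n : ℕ) (i : Fin d) :
    xvec (fun m => A (θ^[m] ω)) n i ≤ ((K + (2 * K + |a|) * d + n * a +
      birkhoffSum θ (fun ω => defect r a K fun m => A (θ^[m] ω)) n ω : ℝ) : EReal) := by
  have hbound := xvec_le_of_potential (f := fun m => A (θ^[m] ω))
    (Φ := fun m => potential r a K fun k => A (θ^[k] (θ^[m] ω)))
    (β := fun m => a + defect r a K fun k => A (θ^[k] (θ^[m] ω)))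
    (fun i => potential_le r a hK _ i)
    (fun m i j => by
      rw [Function.iterate_succ_apply']
      exact le_potential_sub (f := fun k => A (θ^[k] (θ^[m] ω))) (hr m) (hA _) hK i j)
    n i
  refine hbound.trans (EReal.coe_le_coe_iff.2 ?_)
  rw [Finset.sum_add_distrib, Finset.sum_const, Finset.card_range, nsmul_eq_mul, birkhoffSum]
  linarith [neg_le_potential r a hK (fun k => A (θ^[k] (θ^[n] ω))) i]

theorem defect_eq_indicator (r : Fin d → Fin d → Prop) (a K : ℝ)
    (f : Ω → ℕ → Fin d → Fin d → EReal) :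
    (fun ω => defect r a K (f ω)) =
      {ω | K < obstruction r a (f ω)}.indicator fun ω => entryBound (f ω 0) + |a| := by
  funext ω
  simp only [defect, Set.indicator, Set.mem_ofPred_eq]

variable [MeasurableSpace Ω] {μ : Measure Ω} {θ : Ω → Ω} {A : Ω → Fin d → Fin d → EReal}

theorem measurable_lvec {f : Ω → ℕ → Fin d → Fin d → EReal}
    (hf : ∀ m i j, Measurable fun ω => f ω m i j) (n : ℕ) (i : Fin d) :
    Measurable fun ω => lvec n (f ω) i := by
  induction n generalizing f i with
  | zero => exact measurable_const
  | succ n ih =>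
    exact Measurable.iSup fun j => (hf 0 i j).add (ih (fun m => hf (m + 1)) j)

theorem measurable_excess (a : ℝ) {f : Ω → ℕ → Fin d → Fin d → EReal}
    (hf : ∀ m i j, Measurable fun ω => f ω m i j) (j : Fin d) :
    Measurable fun ω => excess a (f ω) j :=
  Measurable.iSup fun n => (measurable_lvec (fun m i j => hf m j i) n j).add measurable_const

theorem measurable_mpRestrict {B : Ω → Fin d → Fin d → EReal} (c : Set (Fin d)) {i j : Fin d}
    (hB : Measurable fun ω => B ω i j) : Measurable fun ω => mpRestrict c (B ω) i j := by
  unfold mpRestrict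
  split_ifs
  exacts [hB, measurable_const]

theorem measurable_entryBound {B : Ω → Fin d → Fin d → EReal}
    (hB : ∀ i j, Measurable fun ω => B ω i j) : Measurable fun ω => entryBound (B ω) :=
  ((Measurable.iSup fun i => Measurable.iSup fun j => hB i j).sup measurable_const).ereal_toReal

theorem measurable_obstruction (r : Fin d → Fin d → Prop) (a : ℝ)
    {f : Ω → ℕ → Fin d → Fin d → EReal} (hf : ∀ m i j, Measurable fun ω => f ω m i j) :
    Measurable fun ω => obstruction r a (f ω) :=
  (measurable_entryBound (hf 0)).coe_real_ereal.sup <| Measurable.iSup fun j =>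
    measurable_excess a (fun m i k => measurable_mpRestrict (sccOf r j) (hf m i k)) j

theorem measurable_iterate_entry (hθ : Measurable θ) (hA : Measurable A) (m : ℕ) (i j : Fin d) :
    Measurable fun ω => A (θ^[m] ω) i j :=
  (measurable_pi_iff.1 (measurable_pi_iff.1 hA i) j).comp (hθ.iterate m)

theorem integrable_defect [IsFiniteMeasure μ] (r : Fin d → Fin d → Prop) (a K : ℝ)
    {f : Ω → ℕ → Fin d → Fin d → EReal} (hf : ∀ m i j, Measurable fun ω => f ω m i j)
    (hint : Integrable (fun ω => entryBound (f ω 0)) μ) :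
    Integrable (fun ω => defect r a K (f ω)) μ := by
  rw [defect_eq_indicator]
  exact (hint.add (integrable_const |a|)).indicator
    (measurableSet_lt measurable_const (measurable_obstruction r a hf))

theorem tendsto_integral_defect [IsFiniteMeasure μ] (r : Fin d → Fin d → Prop) (a : ℝ)
    {f : Ω → ℕ → Fin d → Fin d → EReal} (hf : ∀ m i j, Measurable fun ω => f ω m i j)
    (hint : Integrable (fun ω => entryBound (f ω 0)) μ)
    (hfin : ∀ᵐ ω ∂μ, obstruction r a (f ω) < ⊤) :
    Tendsto (fun K : ℕ => ∫ ω, defect r a K (f ω) ∂μ) atTop (𝓝 0) := by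
  have hobs := measurable_obstruction r a hf
  simp only [defect_eq_indicator, integral_indicator (measurableSet_lt measurable_const hobs)]
  exact tendsto_setIntegral_natCast_lt hobs hfin (hint.add (integrable_const |a|))

theorem ae_obstruction_lt_top {r : Fin d → Fin d → Prop} {a : ℝ}
    (hA : ∀ ω i j, A ω i j ≠ ⊤) {γ : Set (Fin d) → EReal}
    (hγ : ∀ c, IsSCC r c → ∀ᵐ ω ∂μ, Tendsto
      (fun n => mpScale n (⨆ i, ⨆ (_ : i ∈ c), xvec (fun m => mpRestrict c (A (θ^[m] ω))) n i))
      atTop (𝓝 (γ c)))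
    (ha : ∀ c, IsSCC r c → γ c < a) :
    ∀ᵐ ω ∂μ, obstruction r a (fun m => A (θ^[m] ω)) < ⊤ := by
  have hscc (j : Fin d) : IsSCC r (sccOf r j) := ⟨j, rfl⟩
  filter_upwards [ae_all_iff.2 fun j => hγ _ (hscc j)] with ω hω
  rw [obstruction, ← Finset.sup_univ_eq_iSup]
  exact max_lt (EReal.coe_lt_top _) ((Finset.sup_lt_iff bot_lt_top).2 fun j _ =>
    excess_mpRestrict_lt_top (fun m => hA _) (ha _ (hscc j)) (hω j) j)

theorem ae_iterate_eq_bot_of_not_arcRel (hθ : MeasurePreserving θ μ μ)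
    (A : Ω → Fin d → Fin d → EReal) :
    ∀ᵐ ω ∂μ, ∀ m i j, ¬ arcRel μ A i j → A (θ^[m] ω) i j = ⊥ := by
  simp only [ae_all_iff, arcRel, not_not]
  exact fun m i j hij => (hθ.iterate m).quasiMeasurePreserving.ae (ae_iff.2 hij)

end RandomMatrices

section LyapunovExponents

theorem eventually_le_birkhoffAverage {α : Type*} {T : α → α} {G : α → ℝ} {ω : α} {x : ℕ → EReal}
    {γ : EReal} {C a ε : ℝ} (hlim : Tendsto (fun n => mpScale n (x n)) atTop (𝓝 γ))
    (hγ : ((a + ε : ℝ) : EReal) < γ)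
    (hx : ∀ n, x n ≤ ((C + n * a + birkhoffSum T G n ω : ℝ) : EReal)) :
    ∀ᶠ n in atTop, ε ≤ birkhoffAverage ℝ T G n ω := by
  obtain ⟨b, hab, hbγ⟩ := EReal.lt_iff_exists_real_btwn.1 hγ
  have hC : ∀ᶠ n : ℕ in atTop, C / n < b - (a + ε) :=
    (tendsto_const_div_atTop_nhds_zero_nat C).eventually_lt_const
      (sub_pos.2 (EReal.coe_lt_coe_iff.1 hab))
  filter_upwards [hlim.eventually_const_lt hbγ, hC, eventually_ne_atTop 0] with n hbn hCn hn
  have hb : b < (n : ℝ)⁻¹ * (C + n * a + birkhoffSum T G n ω) := by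
    rw [← EReal.coe_lt_coe_iff, ← mpScale_coe]
    exact hbn.trans_le (mpScale_mono n (hx n))
  rw [mul_add, mul_add, inv_mul_cancel_left₀ (Nat.cast_ne_zero.2 hn), inv_mul_eq_div] at hb
  rw [birkhoffAverage, smul_eq_mul]
  linarith

variable {d : ℕ} {Ω : Type*} [MeasurableSpace Ω] {μ : Measure Ω} {θ : Ω → Ω}
  {A : Ω → Fin d → Fin d → EReal} {γA : EReal}

theorem lyapunov_le_add_integral_defect [IsProbabilityMeasure μ] (hθ : MeasurePreserving θ μ μ)
    (hA : Measurable A) (hnotop : ∀ ω i j, A ω i j ≠ ⊤)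
    (hint : Integrable (fun ω => entryBound (A ω)) μ)
    (hγA : ∀ᵐ ω ∂μ, Tendsto (fun n => mpScale n (⨆ i, xvec (fun m => A (θ^[m] ω)) n i))
      atTop (𝓝 γA)) (a : ℝ) {K : ℝ} (hK : 0 ≤ K) :
    γA ≤ ((a + ∫ ω, defect (arcRel μ A) a K fun m => A (θ^[m] ω) ∂μ : ℝ) : EReal) := by
  by_contra! hlt
  obtain ⟨b, hb, hbγ⟩ := EReal.lt_iff_exists_real_btwn.1 hlt
  have hle : b - a ≤ ∫ ω, (defect (arcRel μ A) a K fun m => A (θ^[m] ω)) ∂μ := by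
    refine le_integral_of_eventually_le_birkhoffAverage hθ
      (integrable_defect _ a K (measurable_iterate_entry hθ.measurable hA) hint)
      (fun ω => defect_nonneg _ _ _ _) ?_
    filter_upwards [hγA, ae_iterate_eq_bot_of_not_arcRel hθ A] with ω hlim hr
    exact eventually_le_birkhoffAverage hlim (by rwa [add_sub_cancel])
      fun n => iSup_le fun i => xvec_iterate_le a hK hnotop hr n i
  linarith [EReal.coe_lt_coe_iff.1 hb]

theorem lyapunov_le_of_forall_scc_lt [IsProbabilityMeasure μ] (hθ : MeasurePreserving θ μ μ)
    (hA : Measurable A) (hnotop : ∀ ω i j, A ω i j ≠ ⊤)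
    (hint : Integrable (fun ω => entryBound (A ω)) μ)
    (hγA : ∀ᵐ ω ∂μ, Tendsto (fun n => mpScale n (⨆ i, xvec (fun m => A (θ^[m] ω)) n i))
      atTop (𝓝 γA)) {γ : Set (Fin d) → EReal}
    (hγ : ∀ c, IsSCC (arcRel μ A) c → ∀ᵐ ω ∂μ, Tendsto
      (fun n => mpScale n (⨆ i, ⨆ (_ : i ∈ c), xvec (fun m => mpRestrict c (A (θ^[m] ω))) n i))
      atTop (𝓝 (γ c))) {a : ℝ} (ha : ∀ c, IsSCC (arcRel μ A) c → γ c < a) :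
    γA ≤ a := by
  have hdefect := tendsto_integral_defect (arcRel μ A) a
    (measurable_iterate_entry hθ.measurable hA) hint (ae_obstruction_lt_top hnotop hγ ha)
  have hlim := (continuous_coe_real_ereal.tendsto _).comp (hdefect.const_add a)
  rw [add_zero] at hlim
  exact ge_of_tendsto' hlim fun K =>
    lyapunov_le_add_integral_defect hθ hA hnotop hint hγA a K.cast_nonneg

theorem lyapunov_mpRestrict_le [NeZero μ]
    (hγA : ∀ᵐ ω ∂μ, Tendsto (fun n => mpScale n (⨆ i, xvec (fun m => A (θ^[m] ω)) n i))
      atTop (𝓝 γA)) {c : Set (Fin d)} {γc : EReal}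
    (hγc : ∀ᵐ ω ∂μ, Tendsto
      (fun n => mpScale n (⨆ i, ⨆ (_ : i ∈ c), xvec (fun m => mpRestrict c (A (θ^[m] ω))) n i))
      atTop (𝓝 γc)) :
    γc ≤ γA := by
  obtain ⟨ω, hA, hc⟩ := (hγA.and hγc).exists
  exact le_of_tendsto_of_tendsto' hc hA fun n => mpScale_mono n <| iSup_mono fun i =>
    iSup_le fun _ => xvec_mono (fun m => mpRestrict_le c (A (θ^[m] ω))) n i

end LyapunovExponents

theorem lyapunov_decomposition_general
    {d : ℕ} {Ω : Type*} [MeasurableSpace Ω] (μ : Measure Ω) [IsProbabilityMeasure μ]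
    (θ : Ω → Ω) (hθ : MeasurePreserving θ μ μ)
    (A : Ω → Fin d → Fin d → EReal) (hA : Measurable A)
    (hnotop : ∀ ω i j, A ω i j ≠ ⊤)
    (hint : Integrable (fun ω => ((⨆ i, ⨆ j, A ω i j) ⊔ 0).toReal) μ)
    (γA : EReal)
    (hγA : ∀ᵐ ω ∂μ, Tendsto (fun n => mpScale n (⨆ i, xvec (fun m => A (θ^[m] ω)) n i))
      atTop (𝓝 γA))
    (γ : Set (Fin d) → EReal)
    (hγ : ∀ c : Set (Fin d), IsSCC (arcRel μ A) c →
      ∀ᵐ ω ∂μ, Tendsto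
        (fun n => mpScale n (⨆ i, ⨆ (_ : i ∈ c), xvec (fun m => mpRestrict c (A (θ^[m] ω))) n i))
        atTop (𝓝 (γ c))) :
    γA = ⨆ c, ⨆ (_ : IsSCC (arcRel μ A) c), γ c := by
  apply le_antisymm
  · by_contra! hlt
    obtain ⟨a, hγa, haγA⟩ := EReal.lt_iff_exists_real_btwn.1 hlt
    exact haγA.not_ge (lyapunov_le_of_forall_scc_lt hθ hA hnotop hint hγA hγ fun c hc =>
      (le_iSup₂ (f := fun c (_ : IsSCC (arcRel μ A) c) => γ c) c hc).trans_lt hγa)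
  · exact iSup₂_le fun c hc => lyapunov_mpRestrict_le hγA (hγ c hc)

/-- **Theorem (Baccelli–Liu decomposition of the Lyapunov exponent).**
If `(A(n))_{n∈ℕ}` is a stationary ergodic sequence (realized as `A ∘ θⁿ`) of random
`d × d` matrices over `ℝ_max` with the positive part of `max_{ij} A_{ij}(0)` integrable,
then `γ(A) = max { γ^{(c)} : c s.c.c. of 𝒢(A) }`. -/
theorem lyapunov_decomposition
    {d : ℕ} {Ω : Type*} [MeasurableSpace Ω] (μ : Measure Ω) [IsProbabilityMeasure μ]
    (θ : Ω → Ω) (hθ : Ergodic θ μ)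
    (A : Ω → Fin d → Fin d → EReal) (hA : Measurable A)
    (hnotop : ∀ ω i j, A ω i j ≠ ⊤)
    (hint : Integrable (fun ω => ((⨆ i, ⨆ j, A ω i j) ⊔ 0).toReal) μ)
    (γA : EReal)
    (hγA : ∀ᵐ ω ∂μ, Tendsto (fun n => mpScale n (⨆ i, xvec (fun m => A (θ^[m] ω)) n i))
      atTop (𝓝 γA))
    (γ : Set (Fin d) → EReal)
    (hγ : ∀ c : Set (Fin d), IsSCC (arcRel μ A) c →
      ∀ᵐ ω ∂μ, Tendsto
        (fun n => mpScale n (⨆ i, ⨆ (_ : i ∈ c), xvec (fun m => mpRestrict c (A (θ^[m] ω))) n i))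
        atTop (𝓝 (γ c))) :
    γA = ⨆ c, ⨆ (_ : IsSCC (arcRel μ A) c), γ c :=
  lyapunov_decomposition_general μ θ hθ.toMeasurePreserving A hA hnotop hint γA hγA γ hγ
end
end

section
/- Let (A(n))_{n∈ℤ} be a stationary and ergodic sequence of random d×d matrices with entries in ℝ_max, almost surely having at least one finite entry on each row, such that A(0)⊗0 is integrable, and suppose (1/n)·y(n,0) converges almost surely to a deterministic vector L ∈ ℝ^d. Then for every arc (i,j) of 𝒢(A) (i.e. whenever ℙ(A_{ij}(0) ≠ -∞) > 0), L_i ≥ L_j; consequently, for every strongly connected component c of 𝒢(A) and every i ∈ c, L_i = max_{j∈F_c} L_j. -/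
open Filter MeasureTheory ProbabilityTheory Topology

noncomputable section

/-- `F_c` : the union of the s.c.c.'s reachable from `c`. -/
def Fset {d : ℕ} (r : Fin d → Fin d → Prop) (c : Set (Fin d)) : Set (Fin d) :=
  {j | ∃ ct, IsSCC r ct ∧ sccReach r c ct ∧ j ∈ ct}

/-!
If `A(0)_{ij}` is not `-∞`, then `y_i(n + 1, 0)`, read at time `1`, is at least
`A(0)_{ij} + y_j(n, 0)`, read at time `0`. Dividing by `n` makes the fixed entry `A(0)_{ij}`
disappear in the limit. Since `L` is deterministic and null sets pull back to null sets under the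
shift, the limit is the same at both times, whence `L_j ≤ L_i`. By transitivity `L` decreases along
paths of `𝒢(A)`, and `F_c` is the set of nodes that can be reached from any given node of `c`.
-/

section Growth

lemma mpScale_eq_div (n : ℕ) (x : EReal) : mpScale n x = x / n := by
  rw [mpScale, EReal.coe_inv, EReal.coe_natCast, EReal.div_eq_inv_mul]

lemma tendsto_succ_div_natCast {y : ℕ → EReal} {l : EReal}
    (hy : Tendsto (fun n ↦ y n / n) atTop (𝓝 l)) :
    Tendsto (fun n : ℕ ↦ y (n + 1) / n) atTop (𝓝 l) := by
  have hratio : Tendsto (fun n : ℕ ↦ ((n + 1 : ℕ) : EReal) / n) atTop (𝓝 1) := by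
    have hreal : Tendsto (fun n : ℕ ↦ ((n + 1 : ℕ) : ℝ) / n) atTop (𝓝 1) := by
      simpa [add_comm] using tendsto_add_mul_div_add_mul_atTop_nhds (1 : ℝ) 0 1 one_ne_zero
    simpa only [EReal.coe_div, EReal.coe_natCast, EReal.coe_one] using EReal.tendsto_coe.2 hreal
  have hmul := EReal.Tendsto.mul ((tendsto_add_atTop_iff_nat 1).2 hy) hratio
    (.inr (EReal.coe_ne_bot 1)) (.inr (EReal.coe_ne_top 1)) (.inr one_ne_zero) (.inr one_ne_zero)
  rw [mul_one] at hmul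
  refine hmul.congr fun n ↦ ?_
  rw [EReal.mul_div, EReal.div_mul_cancel (EReal.natCast_ne_bot _) (EReal.natCast_ne_top _)
    (Nat.cast_ne_zero.2 n.succ_ne_zero)]

lemma le_of_tendsto_div_of_add_le_succ {y z : ℕ → EReal} {a l m : EReal} (ha : a ≠ ⊥)
    (hy : Tendsto (fun n ↦ y n / n) atTop (𝓝 l)) (hz : Tendsto (fun n ↦ z n / n) atTop (𝓝 m))
    (hle : ∀ᶠ n in atTop, a + z n ≤ y (n + 1)) : m ≤ l := by
  obtain ⟨b, -, hba⟩ := EReal.lt_iff_exists_real_btwn.1 (bot_lt_iff_ne_bot.2 ha)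
  have hzy : ∀ᶠ n in atTop, z n ≤ y (n + 1) + (-b : ℝ) := by
    filter_upwards [hle] with n hn
    have hbz : z n + b ≤ y (n + 1) := by
      rw [add_comm]
      exact (add_le_add_left hba.le _).trans hn
    exact EReal.le_sub_iff_add_le (.inl (EReal.coe_ne_bot b)) (.inl (EReal.coe_ne_top b)) |>.2 hbz
  calc m = LinearGrowth.linearGrowthInf z := hz.liminf_eq.symm
    _ ≤ LinearGrowth.linearGrowthInf fun n ↦ y (n + 1) :=
        LinearGrowth.linearGrowthInf_le_of_eventually_le (EReal.coe_ne_top _) hzy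
    _ = l := (tendsto_succ_div_natCast hy).liminf_eq

end Growth

section Graph

variable {d : ℕ} {r : Fin d → Fin d → Prop} {c : Set (Fin d)} {i j : Fin d}

lemma IsSCC.mem_Fset_iff (hc : IsSCC r c) (hi : i ∈ c) :
    j ∈ Fset r c ↔ Relation.ReflTransGen r i j := by
  constructor
  · rintro ⟨_, ⟨l, rfl⟩, ⟨p, hp, q, hq, hpq⟩, hj⟩
    obtain ⟨k, rfl⟩ := hc
    exact hi.2.trans (hp.1.trans (hpq.trans (hq.2.trans hj.1)))
  · exact fun hij ↦ ⟨_, ⟨j, rfl⟩, ⟨i, hi, j, ⟨.refl, .refl⟩, hij⟩, .refl, .refl⟩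

lemma IsSCC.isGreatest_image_Fset {α : Type*} [Preorder α] {f : Fin d → α}
    (hf : ∀ i j, r i j → f j ≤ f i) (hc : IsSCC r c) (hi : i ∈ c) :
    IsGreatest (f '' Fset r c) (f i) := by
  refine ⟨Set.mem_image_of_mem f ((hc.mem_Fset_iff hi).2 .refl), ?_⟩
  rintro _ ⟨j, hj, rfl⟩
  simpa only [Relation.reflTransGen_eq_self] using
    ((hc.mem_Fset_iff hi).1 hj).lift (p := (· ≥ ·)) f hf

end Graph

section Limit

variable {d : ℕ} {Ω : Type*} {θ θ' : Ω → Ω}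

lemma add_appProd_le_appProd_succ (n : ℕ) (f : ℕ → Fin d → Fin d → EReal) (v : Fin d → EReal)
    (i j : Fin d) : f 0 i j + appProd n (fun k ↦ f (k + 1)) v j ≤ appProd (n + 1) f v i :=
  le_iSup (fun j ↦ f 0 i j + appProd n (fun k ↦ f (k + 1)) v j) j

lemma add_lvec_le_lvec_succ (hθ' : Function.LeftInverse θ' θ) (A : Ω → Fin d → Fin d → EReal)
    (n : ℕ) (ω : Ω) (i j : Fin d) :
    A ω i j + lvec n (fun k ↦ A (θ'^[k + 1] ω)) j ≤
      lvec (n + 1) (fun k ↦ A (θ'^[k + 1] (θ ω))) i := by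
  simpa only [lvec, Function.iterate_succ_apply, hθ' ω, Function.iterate_zero_apply] using
    add_appProd_le_appProd_succ n (fun k ↦ A (θ'^[k + 1] (θ ω))) (fun _ ↦ 0) i j

theorem deterministic_limit_monotone_on_graph_general [MeasurableSpace Ω] {μ : Measure Ω}
    (hθ : Measure.QuasiMeasurePreserving θ μ μ) (hθ' : Function.LeftInverse θ' θ)
    (A : Ω → Fin d → Fin d → EReal) (L : Fin d → EReal)
    (hL : ∀ᵐ ω ∂μ, ∀ i, Tendsto (fun n ↦ mpScale n (lvec n (fun k ↦ A (θ'^[k + 1] ω)) i))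
      atTop (𝓝 (L i))) :
    (∀ i j, arcRel μ A i j → L j ≤ L i) ∧
    (∀ c : Set (Fin d), IsSCC (arcRel μ A) c → ∀ i ∈ c,
      IsGreatest (L '' Fset (arcRel μ A) c) (L i)) := by
  have harc : ∀ i j, arcRel μ A i j → L j ≤ L i := by
    intro i j hij
    simp only [mpScale_eq_div] at hL
    have hfreq : ∃ᵐ ω ∂μ, A ω i j ≠ ⊥ := frequently_ae_iff.2 hij
    obtain ⟨ω, hω, hLω, hLθω⟩ := (hfreq.and_eventually (hL.and (hθ.ae hL))).exists
    exact le_of_tendsto_div_of_add_le_succ hω (hLθω i) (hLω j)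
      (.of_forall fun n ↦ add_lvec_le_lvec_succ hθ' A n ω i j)
  exact ⟨harc, fun c hc i hi ↦ hc.isGreatest_image_Fset harc hi⟩

end Limit

/-- **Monotonicity of the deterministic limit along arcs of `𝒢(A)`.**
If `(A(n))_{n∈ℤ}` is stationary ergodic, a.s. row-finite, `A(0) ⊗ 0` integrable and
`(1/n) y(n,0) → L` a.s. with `L ∈ ℝ^d` deterministic, then `L_i ≥ L_j` for every arc
`(i,j)` of `𝒢(A)`; consequently `L_i = max_{j ∈ F_c} L_j` for every s.c.c. `c` and `i ∈ c`. -/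
theorem deterministic_limit_monotone_on_graph
    {d : ℕ} {Ω : Type*} [MeasurableSpace Ω] (μ : Measure Ω) [IsProbabilityMeasure μ]
    (θ θ' : Ω → Ω) (hθ : Ergodic θ μ)
    (hinv : ∀ ω, θ (θ' ω) = ω ∧ θ' (θ ω) = ω)
    (A : Ω → Fin d → Fin d → EReal) (hA : Measurable A)
    (hnotop : ∀ ω i j, A ω i j ≠ ⊤)
    (hrow : ∀ᵐ ω ∂μ, ∀ i, ∃ j, A ω i j ≠ ⊥)
    (hint : ∀ i, Integrable (fun ω => (⨆ j, A ω i j).toReal) μ)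
    (L : Fin d → ℝ)
    (hL : ∀ᵐ ω ∂μ, ∀ i, Tendsto (fun n => mpScale n (lvec n (fun k => A (θ'^[k + 1] ω)) i))
      atTop (𝓝 ((L i : ℝ) : EReal))) :
    (∀ i j, arcRel μ A i j → L j ≤ L i) ∧
    (∀ c : Set (Fin d), IsSCC (arcRel μ A) c → ∀ i ∈ c,
      L i = sSup (L '' Fset (arcRel μ A) c)) := by
  obtain ⟨harc, hmax⟩ := deterministic_limit_monotone_on_graph_general
    hθ.quasiMeasurePreserving (fun ω ↦ (hinv ω).2) A (fun i ↦ (L i : EReal)) hL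
  refine ⟨fun i j hij ↦ EReal.coe_le_coe_iff.1 (harc i j hij), fun c hc i hi ↦ ?_⟩
  have hLi := hmax c hc i hi
  rw [← Set.image_image, EReal.coe_strictMono.map_isGreatest] at hLi
  exact hLi.csSup_eq.symm
end
end
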